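/- Let V' be a finite vertex set, let w' be a weight function on V' with values in ℕ ∪ {∞}, let s ∈ V', and suppose d(v) := d_{w'}(s,v) < ∞ for every v ∈ V'. Let ℓ ≥ 1 and i ≥ 1 be integers, let B ⊆ V' \ {s} be a set with d(v) ≥ (i−1)·ℓ for every v ∈ B, and let d_i : B → ℕ satisfy d_i(v) ≥ d(v) for every v ∈ B. Assume additionally that: (a) every v ∈ V' with i·ℓ ≤ d(v) < (i+1)·ℓ belongs to B; and (b) for every edge (u,v) of w' with d(u) < i·ℓ and v ∈ B, one has d_i(v) ≤ d(u) + w'(u,v). Define w̃ on the vertex set {s} ∪ B by: w̃(u,v) = w'(u,v) for u,v ∈ B; w̃(s,v) = min{ w'(s,v), d_i(v) − (i−1)·ℓ } for v ∈ B; and w̃(v,s) = ∞ for all v ∈ B. Then for every t ∈ B with i·ℓ ≤ d(t) < (i+1)·ℓ, d_{w̃}(s,t) = d(t) − (i−1)·ℓ. -/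

import Mathlib

/-!
The bucket graph distance is compared with `d = dist w' s` by two inductions along paths, adding
one vertex at the end at each step (`path_induction`). Write `c = (i-1)ℓ`.

* `d t ≤ dist wt s t + c`: every `wt`-path from `s` to `t ∈ B` has length at least `d t - c`.
  An edge inside `B` has its original weight, and an edge `s → v` has weight at least `d v - c`
  because both `w' s v` and `di v` are at least `d v`.
* `dist wt s t + c ≤ d t`: follow a shortest `w'`-path to `t`, all of whose prefixes are shortest.
  The last edge `(u, v)` of a prefix ending in the window `iℓ ≤ d v < (i+1)ℓ` either has
  `d u < iℓ`, in which case the shortcut `s → v` costs at most `di v - c ≤ d v - c` by `hb`, or has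
  `u` in the window too, so that `u, v ∈ B` by `ha` and the edge is kept in the bucket graph.
-/

open scoped ENNReal ENat

namespace Paper

variable {V : Type*} {α : Type*}

/-- The length of a walk `l` (a list of vertices) under weight `w`:
the sum of the weights of consecutive pairs. -/
def walkLen [AddCommMonoid α] (w : V → V → α) (l : List V) : α :=
  ((l.zip l.tail).map fun p => w p.1 p.2).sum

/-- `l` is a path from `s` to `t` in the weighted digraph `w`: nonempty,
starts at `s`, ends at `t`, and every consecutive pair is an edge (finite weight). -/
def IsPathFrom [AddCommMonoid α] [CompleteLattice α]
    (w : V → V → α) (s t : V) (l : List V) : Prop :=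
  l ≠ [] ∧ l.head? = some s ∧ l.getLast? = some t ∧ l.Chain' (fun u v => w u v ≠ ⊤)

/-- The distance from `s` to `t`: the infimum of lengths of paths from `s` to `t`
(`⊤` if there is no path). -/
noncomputable def dist [AddCommMonoid α] [CompleteLattice α]
    (w : V → V → α) (s t : V) : α :=
  sInf {x | ∃ l, IsPathFrom w s t l ∧ walkLen w l = x}

/-- The `h`-hop distance from `s` to `t`: the infimum of lengths of paths
from `s` to `t` with at most `h` hops. -/
noncomputable def hdist [AddCommMonoid α] [CompleteLattice α]
    (h : ℕ) (w : V → V → α) (s t : V) : α :=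
  sInf {x | ∃ l, IsPathFrom w s t l ∧ l.length ≤ h + 1 ∧ walkLen w l = x}

theorem walkLen_snoc (w : V → V → ℕ∞) (l : List V) (u v : V) (h : l.getLast? = some u) :
    walkLen w (l ++ [v]) = walkLen w l + w u v := by
  induction l with
  | nil => simp at h
  | cons a l ih =>
    cases l with
    | nil =>
      simp at h
      simp [walkLen, h]
    | cons b l =>
      have h' : (b :: l).getLast? = some u := by simpa using h
      have := ih h'
      simp only [walkLen, List.cons_append, List.tail_cons, List.zip_cons_cons, List.map_cons,
        List.sum_cons] at this ⊢
      rw [this, add_assoc]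

theorem IsPathFrom.snoc {w : V → V → ℕ∞} {s u v : V} {l : List V} (h : IsPathFrom w s u l)
    (huv : w u v ≠ ⊤) : IsPathFrom w s v (l ++ [v]) := by
  obtain ⟨h0, h1, h2, h3⟩ := h
  refine ⟨by simp, by simp [List.head?_append, h1], by simp, ?_⟩
  refine List.IsChain.append h3 (List.isChain_singleton v) ?_
  simp [h2, huv]

/-- Induction on paths out of `s`, extending the path at its far end; `P v x` is to be read as a
property of the endpoint `v` and the length `x`. -/
theorem path_induction {w : V → V → ℕ∞} {s : V} {P : V → ℕ∞ → Prop} (h0 : P s 0)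
    (hstep : ∀ u v x, w u v ≠ ⊤ → P u x → P v (x + w u v)) (l : List V) :
    ∀ t, IsPathFrom w s t l → P t (walkLen w l) := by
  induction l using List.reverseRecOn with
  | nil => exact fun t h => absurd rfl h.1
  | append_singleton l a ih =>
    rintro t ⟨-, h1, h2, h3⟩
    obtain rfl : a = t := by simpa using h2
    rcases hl : l.getLast? with _ | u
    · obtain rfl : l = [] := by simpa using hl
      obtain rfl : a = s := by simpa using h1
      simpa [walkLen] using h0
    · have hne : l ≠ [] := by rintro rfl; simp at hl
      have h3' := List.isChain_append.1 h3
      rw [walkLen_snoc w l u a hl]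
      refine hstep u a _ (h3'.2.2 u hl a (by simp)) (ih u ⟨hne, ?_, hl, h3'.1⟩)
      rwa [List.head?_append_of_ne_nil _ hne] at h1

theorem dist_le_walkLen {w : V → V → ℕ∞} {s t : V} {l : List V} (h : IsPathFrom w s t l) :
    dist w s t ≤ walkLen w l := sInf_le ⟨l, h, rfl⟩

/-- A finite distance is attained, since `ℕ∞` is well-ordered. -/
theorem exists_shortest {w : V → V → ℕ∞} {s t : V} (h : dist w s t ≠ ⊤) :
    ∃ l, IsPathFrom w s t l ∧ walkLen w l = dist w s t := by
  have hne : {x | ∃ l, IsPathFrom w s t l ∧ walkLen w l = x}.Nonempty := by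
    by_contra hc
    rw [Set.not_nonempty_iff_eq_empty] at hc
    exact h (by rw [dist, hc, sInf_empty])
  exact csInf_mem hne

theorem dist_self (w : V → V → ℕ∞) (s : V) : dist w s s = 0 := by
  have h : IsPathFrom w s s [s] := ⟨by simp, by simp, by simp, List.isChain_singleton s⟩
  simpa [walkLen] using dist_le_walkLen h

theorem dist_le_add (w : V → V → ℕ∞) (s u v : V) : dist w s v ≤ dist w s u + w u v := by
  by_cases hu : dist w s u = ⊤
  · simp [hu]
  by_cases huv : w u v = ⊤
  · simp [huv]
  obtain ⟨l, hl, he⟩ := exists_shortest hu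
  have := dist_le_walkLen (hl.snoc huv)
  rwa [walkLen_snoc w l u v hl.2.2.1, he] at this

/-- On the bucket graph `w̃` over `{s} ∪ B`, if additionally (a) every `v`
with `i·ℓ ≤ d(v) < (i+1)·ℓ` belongs to `B`, and (b) for every edge `(u,v)` of `w'` with
`d(u) < i·ℓ` and `v ∈ B` one has `d_i(v) ≤ d(u) + w'(u,v)`, then
`d_{w̃}(s,t) = d(t) − (i−1)·ℓ` for every `t ∈ B` with `i·ℓ ≤ d(t) < (i+1)·ℓ`. -/
theorem statement12 {V' : Type*} [Fintype V'] [DecidableEq V']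
    (w' : V' → V' → ℕ∞) (s : V')
    (hfin : ∀ v : V', dist w' s v ≠ ⊤)
    (ℓ i : ℕ) (hℓ : 1 ≤ ℓ) (hi : 1 ≤ i)
    (B : Set V') [DecidablePred (· ∈ B)] (hsB : s ∉ B)
    (hB : ∀ v ∈ B, (((i-1)*ℓ : ℕ) : ℕ∞) ≤ dist w' s v)
    (di : V' → ℕ) (hdi : ∀ v ∈ B, dist w' s v ≤ (di v : ℕ∞))
    (ha : ∀ v : V', ((i*ℓ : ℕ) : ℕ∞) ≤ dist w' s v →
      dist w' s v < (((i+1)*ℓ : ℕ) : ℕ∞) → v ∈ B)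
    (hb : ∀ u v : V', w' u v ≠ ⊤ → dist w' s u < ((i*ℓ : ℕ) : ℕ∞) → v ∈ B →
      (di v : ℕ∞) ≤ dist w' s u + w' u v)
    (wt : V' → V' → ℕ∞)
    (hwt : ∀ u v : V', wt u v =
      if u ∈ B ∧ v ∈ B then w' u v
      else if u = s ∧ v ∈ B then min (w' u v) (((di v - (i-1)*ℓ : ℕ) : ℕ∞))
      else ⊤) :
    ∀ t ∈ B, ((i*ℓ : ℕ) : ℕ∞) ≤ dist w' s t →
      dist w' s t < (((i+1)*ℓ : ℕ) : ℕ∞) →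
      dist wt s t + (((i-1)*ℓ : ℕ) : ℕ∞) = dist w' s t := by
  set c : ℕ := (i-1)*ℓ with hc
  have hcancel : ∀ v ∈ B, ((di v - c : ℕ) : ℕ∞) + (c : ℕ∞) = di v := by
    intro v hv
    have h : c ≤ di v := by exact_mod_cast (hB v hv).trans (hdi v hv)
    rw [← Nat.cast_add, Nat.sub_add_cancel h]
  have hwtB : ∀ u ∈ B, ∀ v ∈ B, wt u v = w' u v := fun u hu v hv => by
    rw [hwt, if_pos ⟨hu, hv⟩]
  have hwts : ∀ v ∈ B, wt s v = min (w' s v) ((di v - c : ℕ) : ℕ∞) := fun v hv => by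
    rw [hwt, if_neg (fun h => hsB h.1), if_pos ⟨rfl, hv⟩]
  intro t ht hti hti'
  apply le_antisymm
  · obtain ⟨l, hl, he⟩ := exists_shortest (hfin t)
    -- The condition `x = dist w' s v` confines the claim to shortest paths; `dist w' s v ≤ x` is
    -- carried along to see that a prefix of a shortest path is shortest.
    have key := path_induction (w := w') (s := s)
      (P := fun v x => dist w' s v ≤ x ∧ (x = dist w' s v → ((i*ℓ : ℕ) : ℕ∞) ≤ dist w' s v →
        dist w' s v < (((i+1)*ℓ : ℕ) : ℕ∞) → dist wt s v + (c : ℕ∞) ≤ dist w' s v))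
      ?_ ?_ l t hl
    · exact key.2 he hti hti'
    · refine ⟨(dist_self w' s).le, fun _ h _ => ?_⟩
      rw [dist_self] at h
      have h' : i * ℓ ≤ 0 := by exact_mod_cast h
      have := Nat.mul_pos hi hℓ
      omega
    · rintro u v x huv ⟨hux, ih⟩
      refine ⟨(dist_le_add w' s u v).trans (by gcongr), fun hx h1 h2 => ?_⟩
      have hvB := ha v h1 h2
      have hxu : x = dist w' s u := by
        refine le_antisymm ?_ hux
        have := dist_le_add w' s u v
        rw [← hx] at this
        exact (ENat.add_le_add_iff_right huv).1 this
      subst hxu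
      rcases lt_or_ge (dist w' s u) ((i*ℓ : ℕ) : ℕ∞) with hlt | hge
      · calc dist wt s v + (c : ℕ∞) ≤ (dist wt s s + wt s v) + c := by
              gcongr; exact dist_le_add wt s s v
          _ ≤ ((di v - c : ℕ) : ℕ∞) + c := by
              rw [dist_self, zero_add, hwts v hvB]; gcongr; exact min_le_right _ _
          _ = di v := hcancel v hvB
          _ ≤ _ := hb u v huv hlt hvB
          _ = _ := hx
      · have hlt' : dist w' s u < (((i+1)*ℓ : ℕ) : ℕ∞) :=
          lt_of_le_of_lt (le_self_add.trans hx.le) h2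
        have huB := ha u hge hlt'
        calc dist wt s v + (c : ℕ∞) ≤ (dist wt s u + wt u v) + c := by
              gcongr; exact dist_le_add wt s u v
          _ = (dist wt s u + c) + w' u v := by rw [hwtB u huB v hvB, add_right_comm]
          _ ≤ dist w' s u + w' u v := by gcongr; exact ih rfl hge hlt'
          _ = _ := hx
  · by_cases htop : dist wt s t = ⊤
    · simp [htop]
    obtain ⟨l, hl, he⟩ := exists_shortest htop
    rw [← he]
    refine path_induction (w := wt) (s := s)
      (P := fun v x => v ∈ B → dist w' s v ≤ x + (c : ℕ∞))
      (fun h => absurd h hsB) ?_ l t hl ht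
    intro u v x huv ih hvB
    by_cases huB : u ∈ B
    · calc dist w' s v ≤ dist w' s u + w' u v := dist_le_add w' s u v
        _ ≤ (x + c) + w' u v := by gcongr; exact ih huB
        _ = _ := by rw [hwtB u huB v hvB, add_right_comm]
    · obtain rfl : u = s := by
        by_contra hus
        exact huv (by rw [hwt, if_neg (fun h => huB h.1), if_neg (fun h => hus h.1)])
      have h : dist w' u v ≤ wt u v + c := by
        rw [hwts v hvB]
        rcases min_choice (w' u v) ((di v - c : ℕ) : ℕ∞) with hm | hm <;> rw [hm]
        · refine le_trans ?_ le_self_add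
          simpa [dist_self] using dist_le_add w' u u v
        · rw [hcancel v hvB]; exact hdi v hvB
      exact h.trans (by gcongr; exact le_add_self)

end Paper
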